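/- arXiv:gr-qc/0004041 — 3 statements merged into one kernel-verified Lean document; each statement's English description precedes it below -/
import Mathlib

section
/- Let r be a natural number and n : Fin r → ℕ with nᵢ ≥ 2 for all i. If Σᵢ (1 − 1/nᵢ) = 2 (as rational numbers), then either r = 3, or r = 4 and nᵢ = 2 for every i. -/
/-!
Each cone point carries a share `1 - 1 / x` of the total curvature `2`, and `1 / 2 ≤ 1 - 1 / x < 1`
once `2 ≤ x`. The strict upper bound leaves room for no fewer than three shares, the lower bound for
no more than four, and with four shares all the lower bounds are attained.
-/

open Finset

section OrderedCancelAddCommMonoid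

variable {ι M : Type*} [AddCommMonoid M] [PartialOrder M] [IsOrderedCancelAddMonoid M]
  {s : Finset ι} {f : ι → M} {c : M}

theorem sum_lt_card_nsmul (hs : s.Nonempty) (hf : ∀ i ∈ s, f i < c) :
    ∑ i ∈ s, f i < #s • c :=
  (sum_lt_sum_of_nonempty hs hf).trans_eq (sum_const c)

theorem sum_eq_card_nsmul_iff_of_le (hf : ∀ i ∈ s, c ≤ f i) :
    ∑ i ∈ s, f i = #s • c ↔ ∀ i ∈ s, f i = c := by
  simpa only [sum_const, eq_comm] using sum_eq_sum_iff_of_le hf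

end OrderedCancelAddCommMonoid

theorem one_sub_one_div_eq_half_iff {K : Type*} [DivisionRing K] [NeZero (2 : K)] {x : K} :
    1 - 1 / x = 1 / 2 ↔ x = 2 := by
  rw [← sub_half (1 : K), sub_right_inj, one_div, one_div, inv_inj]

section OrderedField

variable {K : Type*} [Field K] [LinearOrder K] [IsStrictOrderedRing K]

theorem half_le_one_sub_one_div {x : K} (hx : 2 ≤ x) : 1 / 2 ≤ 1 - 1 / x := by
  have hinv : 1 / x ≤ 1 / 2 := one_div_le_one_div_of_le two_pos hx
  linarith

theorem one_sub_one_div_lt_one {x : K} (hx : 0 < x) : 1 - 1 / x < 1 :=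
  sub_lt_self 1 (one_div_pos.2 hx)

theorem stmt_1_general {ι : Type*} {s : Finset ι} {x : ι → K} (hx : ∀ i ∈ s, 2 ≤ x i)
    (hsum : ∑ i ∈ s, (1 - 1 / x i) = 2) :
    #s = 3 ∨ (#s = 4 ∧ ∀ i ∈ s, x i = 2) := by
  have hlower : ∀ i ∈ s, 1 / 2 ≤ 1 - 1 / x i := fun i hi => half_le_one_sub_one_div (hx i hi)
  have hupper : ∀ i ∈ s, 1 - 1 / x i < 1 := fun i hi =>
    one_sub_one_div_lt_one (two_pos.trans_le (hx i hi))
  have hs : s.Nonempty := nonempty_of_sum_ne_zero (hsum ▸ two_ne_zero)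
  have two_lt_card : 2 < #s := by
    have hlt := sum_lt_card_nsmul hs hupper
    rw [hsum, nsmul_one] at hlt
    exact_mod_cast hlt
  have card_le_four : #s ≤ 4 := by
    have hle := card_nsmul_le_sum s _ _ hlower
    rw [hsum, nsmul_eq_mul] at hle
    have hcard : (#s : K) ≤ 4 := by linarith
    exact_mod_cast hcard
  obtain hthree | hfour : #s = 3 ∨ #s = 4 := by lia
  · exact .inl hthree
  · have htight : ∑ i ∈ s, (1 - 1 / x i) = #s • (1 / 2 : K) := by rw [hsum, hfour]; norm_num
    exact .inr ⟨hfour, fun i hi => one_sub_one_div_eq_half_iff.1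
      ((sum_eq_card_nsmul_iff_of_le hlower).1 htight i hi)⟩

end OrderedField

theorem stmt_1 (r : ℕ) (n : Fin r → ℕ) (hn : ∀ i, 2 ≤ n i)
    (hsum : ∑ i, (1 - 1 / (n i : ℚ)) = 2) :
    r = 3 ∨ (r = 4 ∧ ∀ i, n i = 2) := by
  have hgeneral := stmt_1_general (fun i _ => mod_cast hn i) hsum
  norm_cast at hgeneral
  simpa using hgeneral
end

section
/- Let u : ℝ × ℝ → ℝ be twice continuously differentiable and let c : ℝ × ℝ → ℝ be a function with c(x) > 0 for all x. Suppose Δu(x) = c(x)·(exp(2·u(x)) − 1) for all x (where Δu denotes the sum of the two pure second partial derivatives of u), and suppose u attains a global maximum at some point and a global minimum at some point. Then u is identically 0. -/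
/-- The Laplacian of `u : ℝ × ℝ → ℝ` at a point, as the sum of the two pure
second partial derivatives. -/
noncomputable def planeLaplacian (u : ℝ × ℝ → ℝ) (p : ℝ × ℝ) : ℝ :=
  deriv (deriv (fun s => u (s, p.2))) p.1 + deriv (deriv (fun t => u (p.1, t))) p.2

theorem deriv_deriv_nonpos_of_isLocalMax {f : ℝ → ℝ} {a : ℝ} (hmax : IsLocalMax f a)
    (hf : ContinuousAt f a) : deriv (deriv f) a ≤ 0 := by
  by_contra! hpos
  have hmin : IsLocalMin f a := isLocalMin_of_deriv_deriv_pos hpos hmax.deriv_eq_zero hf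
  have hconst : f =ᶠ[nhds a] fun _ => f a := by
    filter_upwards [hmax, hmin] with x hle hge using le_antisymm hle hge
  have hzero : deriv (deriv f) a = 0 := by
    simp only [hconst.deriv.deriv_eq, deriv_const', deriv_const]
  exact hpos.ne' hzero

section PlaneLaplacian

variable {u : ℝ × ℝ → ℝ} {p : ℝ × ℝ}

theorem planeLaplacian_neg : planeLaplacian (fun x => -u x) p = -planeLaplacian u p := by
  simp only [planeLaplacian, deriv.fun_neg', deriv.fun_neg, neg_add]

theorem planeLaplacian_nonpos_of_isLocalMax (hmax : IsLocalMax u p) (hu : ContinuousAt u p) :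
    planeLaplacian u p ≤ 0 := by
  have hfst : Continuous fun s : ℝ => (s, p.2) := by fun_prop
  have hsnd : Continuous fun t : ℝ => (p.1, t) := by fun_prop
  exact add_nonpos
    (deriv_deriv_nonpos_of_isLocalMax (hmax.comp_continuous hfst.continuousAt)
      (ContinuousAt.comp hu hfst.continuousAt))
    (deriv_deriv_nonpos_of_isLocalMax (hmax.comp_continuous hsnd.continuousAt)
      (ContinuousAt.comp hu hsnd.continuousAt))

theorem planeLaplacian_nonneg_of_isLocalMin (hmin : IsLocalMin u p) (hu : ContinuousAt u p) :
    0 ≤ planeLaplacian u p := by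
  simpa only [planeLaplacian_neg, neg_nonpos] using
    planeLaplacian_nonpos_of_isLocalMax hmin.neg hu.neg

end PlaneLaplacian

theorem stmt_11_general (u : ℝ × ℝ → ℝ) (hu : Continuous u)
    (hpos : ∀ x, 0 < u x → 0 < planeLaplacian u x)
    (hneg : ∀ x, u x < 0 → planeLaplacian u x < 0)
    (hmax : ∃ xM, ∀ y, u y ≤ u xM) (hmin : ∃ xm, ∀ y, u xm ≤ u y) :
    ∀ x, u x = 0 := by
  obtain ⟨xM, hM⟩ := hmax
  obtain ⟨xm, hm⟩ := hmin
  have max_nonpos : u xM ≤ 0 := not_lt.mp fun h =>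
    (hpos xM h).not_ge (planeLaplacian_nonpos_of_isLocalMax (.of_forall hM) hu.continuousAt)
  have min_nonneg : 0 ≤ u xm := not_lt.mp fun h =>
    (hneg xm h).not_ge (planeLaplacian_nonneg_of_isLocalMin (.of_forall hm) hu.continuousAt)
  exact fun x => le_antisymm ((hM x).trans max_nonpos) (min_nonneg.trans (hm x))

theorem stmt_11 (u c : ℝ × ℝ → ℝ) (hu : ContDiff ℝ 2 u) (hc : ∀ x, 0 < c x)
    (heq : ∀ x, planeLaplacian u x = c x * (Real.exp (2 * u x) - 1))
    (hmax : ∃ xM, ∀ y, u y ≤ u xM) (hmin : ∃ xm, ∀ y, u xm ≤ u y) :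
    ∀ x, u x = 0 := by
  refine stmt_11_general u hu.continuous (fun x hx => ?_) (fun x hx => ?_) hmax hmin <;> rw [heq]
  · exact mul_pos (hc x) (sub_pos.mpr (Real.one_lt_exp_iff.mpr (by linarith)))
  · exact mul_neg_of_pos_of_neg (hc x) (sub_neg.mpr (Real.exp_lt_one_iff.mpr (by linarith)))
end

section
/- Let A, B, C and A', B', C' be points of the hyperbolic plane (upper half-plane model with its hyperbolic distance) such that dist(A, B) = dist(A', B'), dist(B, C) = dist(B', C'), and dist(C, A) = dist(C', A'). Then there exists an isometric equivalence φ of the upper half-plane onto itself with φ(A) = A', φ(B) = B', and φ(C) = C'. -/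
/-!
For distinct points `p` and `q` of the upper half-plane, the perpendicular bisector of `p` and `q`
is the fixed-point set of an anti-holomorphic Möbius transformation, which is an isometry exchanging
`p` and `q`. Congruent finite families of points are then matched one point at a time: once some of
the points are in their target positions, the reflection that brings the next point `p` to its
target `q` leaves the earlier targets in place, because by congruence they are equidistant from `p`
and `q`.
-/

open Matrix UpperHalfPlane
open scoped Congruent ComplexConjugate

/-- A space has bisector reflections if every point `p` is taken to every point `q` by an isometry
that fixes the perpendicular bisector of `p` and `q`, i.e. the set of points equidistant from `p`
and `q`. The isometry is not required to exchange `p` and `q`. -/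
def HasBisectorReflections (X : Type*) [PseudoEMetricSpace X] : Prop :=
  ∀ p q : X, ∃ φ : X ≃ᵢ X, φ p = q ∧ ∀ r, edist r p = edist r q → φ r = r

theorem HasBisectorReflections.exists_isometryEquiv_of_congruent {X : Type*} [PseudoEMetricSpace X]
    (hX : HasBisectorReflections X) {ι : Type*} [Finite ι] {v w : ι → X} (hvw : v ≅ w) :
    ∃ φ : X ≃ᵢ X, ∀ i, φ (v i) = w i := by
  classical
  have := Fintype.ofFinite ι
  suffices ∀ s : Finset ι, ∃ φ : X ≃ᵢ X, ∀ i ∈ s, φ (v i) = w i by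
    simpa using this Finset.univ
  intro s
  induction s using Finset.induction_on with
  | empty => exact ⟨.refl X, by simp⟩
  | insert j s _ ih =>
    obtain ⟨φ, hφ⟩ := ih
    obtain ⟨ψ, hψj, hψ⟩ := hX (φ (v j)) (w j)
    have hψ_fix (i) (hi : i ∈ s) : ψ (w i) = w i := hψ _ <| calc
      edist (w i) (φ (v j)) = edist (v i) (v j) := by rw [← hφ i hi, φ.edist_eq]
      _ = edist (w i) (w j) := hvw i j
    refine ⟨φ.trans ψ, (Finset.forall_mem_insert _ _ _).2 ⟨hψj, fun i hi ↦ ?_⟩⟩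
    rw [IsometryEquiv.trans_apply, hφ i hi, hψ_fix i hi]

theorem dist_eq_dist_iff_sq_div_im_mul_im {z w z' w' : ℍ} :
    dist z w = dist z' w' ↔
      dist (z : ℂ) w ^ 2 / (z.im * w.im) = dist (z' : ℂ) w' ^ 2 / (z'.im * w'.im) := by
  rw [← Real.cosh_strictMonoOn.injOn.eq_iff dist_nonneg dist_nonneg, cosh_dist, cosh_dist,
    add_right_inj]
  field_simp

theorem num_mul_denom_sub_num_mul_denom (g : GL (Fin 2) ℝ) (z w : ℂ) :
    num g z * denom g w - num g w * denom g z = g.det.val * (z - w) := by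
  simp only [num, denom, GeneralLinearGroup.val_det_apply, det_fin_two, Complex.ofReal_sub,
    Complex.ofReal_mul]
  ring

theorem dist_coe_smul_smul (g : GL (Fin 2) ℝ) (z w : ℍ) :
    dist (↑(g • z) : ℂ) ↑(g • w) =
      |g.det.val| * dist (z : ℂ) w / (‖denom g z‖ * ‖denom g w‖) := by
  rw [coe_smul, coe_smul, dist_eq_norm, ← map_sub, norm_σ,
    div_sub_div _ _ (denom_ne_zero g z) (denom_ne_zero g w), mul_comm (denom g z),
    num_mul_denom_sub_num_mul_denom, norm_div, norm_mul, norm_mul, Complex.norm_real,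
    Real.norm_eq_abs, dist_eq_norm]

instance isIsometricSMul_GL_upperHalfPlane : IsIsometricSMul (GL (Fin 2) ℝ) ℍ where
  isometry_smul g := Isometry.of_dist_eq fun z w ↦ by
    have hdet : |g.det.val| ≠ 0 := abs_ne_zero.2 g.det.ne_zero
    have hz : ‖denom g z‖ ≠ 0 := norm_ne_zero_iff.2 (denom_ne_zero g z)
    have hw : ‖denom g w‖ ≠ 0 := norm_ne_zero_iff.2 (denom_ne_zero g w)
    rw [dist_eq_dist_iff_sq_div_im_mul_im, dist_coe_smul_smul, im_smul_eq_div_normSq,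
      im_smul_eq_div_normSq, Complex.normSq_eq_norm_sq, Complex.normSq_eq_norm_sq]
    field_simp

theorem dist_coe_sq (z w : ℍ) :
    dist (z : ℂ) w ^ 2 = (z.re - w.re) ^ 2 + (z.im - w.im) ^ 2 := by
  rw [Complex.dist_eq_re_im, Real.sq_sqrt (by positivity)]
  rfl

theorem gl_smul_eq_iff_of_det_neg {g : GL (Fin 2) ℝ} (hg : g.val.det < 0) {z w : ℍ} :
    g • z = w ↔ num g z = conj (w : ℂ) * denom g z := by
  have hdet : ¬ 0 < g.det.val := hg.not_gt
  rw [gl_smul_eq_iff_num_eq, σ, if_neg hdet]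
  rfl

theorem gl_smul_eq_self_iff_of_det_neg_of_trace_eq_zero {g : GL (Fin 2) ℝ} (hg : g.val.det < 0)
    (htrace : g.val.trace = 0) {z : ℍ} :
    g • z = z ↔ g 1 0 * Complex.normSq z - 2 * g 0 0 * z.re - g 0 1 = 0 := by
  have h11 : g 1 1 = -g 0 0 := by
    rw [trace_fin_two] at htrace
    linarith
  have hreal : conj (z : ℂ) * denom g z - num g z =
      ((g 1 0 * Complex.normSq z - 2 * g 0 0 * z.re - g 0 1 : ℝ) : ℂ) := by
    simp only [num, denom, h11, Complex.ofReal_sub, Complex.ofReal_mul, Complex.ofReal_neg,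
      Complex.ofReal_ofNat, ← Complex.mul_conj, ← coe_re, Complex.re_eq_add_conj]
    ring
  rw [gl_smul_eq_iff_of_det_neg hg, eq_comm, ← sub_eq_zero, hreal, Complex.ofReal_eq_zero]

/-- The matrix `!![a, -b; c, -a]` for which `c * |z|² - 2 * a * re z + b = 0` is the equation of the
perpendicular bisector of `p` and `q`. Solving the polarized equation
`c * z * conj w - a * (z + conj w) + b = 0` for `z` gives `z = (a * conj w - b) / (c * conj w - a)`,
the reflection of `w` in this bisector. -/
def bisectorMatrix (p q : ℍ) : Matrix (Fin 2) (Fin 2) ℝ :=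
  !![p.re * q.im - q.re * p.im, Complex.normSq q * p.im - Complex.normSq p * q.im;
    q.im - p.im, q.re * p.im - p.re * q.im]

theorem trace_bisectorMatrix (p q : ℍ) : (bisectorMatrix p q).trace = 0 := by
  rw [bisectorMatrix, trace_fin_two_of]
  ring

theorem det_bisectorMatrix (p q : ℍ) :
    (bisectorMatrix p q).det = -(p.im * q.im * dist (p : ℂ) q ^ 2) := by
  rw [bisectorMatrix, det_fin_two_of, dist_coe_sq, Complex.normSq_apply, Complex.normSq_apply]
  simp only [coe_re, coe_im]
  ring

theorem det_bisectorMatrix_neg {p q : ℍ} (hpq : p ≠ q) : (bisectorMatrix p q).det < 0 := by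
  have : 0 < dist (p : ℂ) q := dist_pos.2 (coe_injective.ne hpq)
  rw [det_bisectorMatrix, neg_lt_zero]
  positivity

theorem dist_eq_dist_iff_bisectorMatrix {p q r : ℍ} :
    dist r p = dist r q ↔ bisectorMatrix p q 1 0 * Complex.normSq r -
      2 * bisectorMatrix p q 0 0 * r.re - bisectorMatrix p q 0 1 = 0 := by
  have hfactor :
      ((r.re - p.re) ^ 2 + (r.im - p.im) ^ 2) * (r.im * q.im) -
          ((r.re - q.re) ^ 2 + (r.im - q.im) ^ 2) * (r.im * p.im) =
        r.im * (bisectorMatrix p q 1 0 * Complex.normSq r -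
          2 * bisectorMatrix p q 0 0 * r.re - bisectorMatrix p q 0 1) := by
    simp only [bisectorMatrix, of_apply, cons_val', cons_val_zero, cons_val_one, cons_val_fin_one,
      Complex.normSq_apply, coe_re, coe_im]
    ring
  rw [dist_eq_dist_iff_sq_div_im_mul_im, dist_coe_sq, dist_coe_sq,
    div_eq_div_iff (by positivity) (by positivity), ← sub_eq_zero, hfactor,
    mul_eq_zero_iff_left r.im_ne_zero]

/-- The reflection in the perpendicular bisector of two distinct points `p` and `q`, as an element
of `GL(2, ℝ)`, whose elements of negative determinant act anti-holomorphically on `ℍ`. -/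
noncomputable def bisectorReflection (p q : ℍ) (hpq : p ≠ q) : GL (Fin 2) ℝ :=
  .mkOfDetNeZero (bisectorMatrix p q) (det_bisectorMatrix_neg hpq).ne

theorem val_bisectorReflection {p q : ℍ} (hpq : p ≠ q) :
    (bisectorReflection p q hpq).val = bisectorMatrix p q := rfl

theorem det_bisectorReflection_neg {p q : ℍ} (hpq : p ≠ q) :
    (bisectorReflection p q hpq).val.det < 0 :=
  det_bisectorMatrix_neg hpq

theorem bisectorReflection_smul_left {p q : ℍ} (hpq : p ≠ q) :
    bisectorReflection p q hpq • p = q := by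
  rw [gl_smul_eq_iff_of_det_neg (det_bisectorReflection_neg hpq), num, denom,
    val_bisectorReflection]
  apply Complex.ext
  all_goals
    simp only [bisectorMatrix, of_apply, cons_val', cons_val_zero, cons_val_one, cons_val_fin_one,
      Complex.normSq_apply, Complex.add_re, Complex.add_im, Complex.mul_re, Complex.mul_im,
      Complex.ofReal_re, Complex.ofReal_im, Complex.conj_re, Complex.conj_im, coe_re, coe_im]
    ring

theorem bisectorReflection_smul_eq_self_iff {p q r : ℍ} (hpq : p ≠ q) :
    bisectorReflection p q hpq • r = r ↔ dist r p = dist r q := by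
  have htrace : (bisectorReflection p q hpq).val.trace = 0 := trace_bisectorMatrix p q
  rw [gl_smul_eq_self_iff_of_det_neg_of_trace_eq_zero (det_bisectorReflection_neg hpq) htrace,
    val_bisectorReflection, dist_eq_dist_iff_bisectorMatrix]

theorem hasBisectorReflections_upperHalfPlane : HasBisectorReflections ℍ := by
  intro p q
  by_cases hpq : p = q
  · exact ⟨.refl ℍ, hpq, fun _ _ ↦ rfl⟩
  · refine ⟨.constSMul (bisectorReflection p q hpq), bisectorReflection_smul_left hpq,
      fun r hr ↦ (bisectorReflection_smul_eq_self_iff hpq).2 ?_⟩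
    rw [dist_edist, dist_edist, hr]

theorem stmt_14_general {ι : Type*} [Finite ι] {v w : ι → ℍ} (hvw : v ≅ w) :
    ∃ φ : ℍ ≃ᵢ ℍ, ∀ i, φ (v i) = w i :=
  hasBisectorReflections_upperHalfPlane.exists_isometryEquiv_of_congruent hvw

theorem stmt_14 (A B C A' B' C' : UpperHalfPlane)
    (hAB : dist A B = dist A' B') (hBC : dist B C = dist B' C')
    (hCA : dist C A = dist C' A') :
    ∃ φ : UpperHalfPlane ≃ᵢ UpperHalfPlane, φ A = A' ∧ φ B = B' ∧ φ C = C' := by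
  obtain ⟨φ, hφ⟩ := stmt_14_general (EuclideanGeometry.side_side_side hAB hBC hCA)
  exact ⟨φ, hφ 0, hφ 1, hφ 2⟩
end
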